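/- Let I be a submodule of K[x₁,…,xₙ]^d generated by finitely many homogeneous elements, where K is a field with valuation. Then the graded quotients K[x₁,…,xₙ]^d / I and K[x₁,…,xₙ]^d / in_{w,≺}(I) have the same Hilbert function: for every degree δ ∈ ℕ, the K-dimension of the degree-δ graded component of K[x₁,…,xₙ]^d / I equals the K-dimension of the degree-δ graded component of K[x₁,…,xₙ]^d / in_{w,≺}(I). -/

import Mathlib

open MvPolynomial

/-- A (real-valued, additive) valuation on a field `K`:
`v(ab) = v(a)+v(b)` for nonzero `a,b`, `v(a+b) ≥ min(v a, v b)`, and `v a = ∞ ↔ a = 0`. -/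
structure ValOn (K : Type*) [Field K] where
  v : K → WithTop ℝ
  v_mul : ∀ a b : K, a ≠ 0 → b ≠ 0 → v (a * b) = v a + v b
  v_add_min : ∀ a b : K, min (v a) (v b) ≤ v (a + b)
  v_eq_top_iff : ∀ a : K, v a = ⊤ ↔ a = 0

/-- A module monomial `x^u·e_k` of `R[x₁,…,xₙ]^d`, recorded as the pair `(u, k)`. -/
abbrev MMon (n d : ℕ) := (Fin n →₀ ℕ) × Fin d

/-- A term `c·x^u·e_k`, recorded as `(c, (u, k))`. -/
abbrev Term (R : Type*) (n d : ℕ) := R × MMon n d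

/-- The strict order on module monomials induced by the monomial order `mo`:
`x^α·e_i ≺ x^β·e_j` iff `x^α ≺ x^β`, or `x^α = x^β` and `i < j`. -/
def mmLt {n d : ℕ} (mo : MonomialOrder (Fin n)) (a b : MMon n d) : Prop :=
  mo.toSyn a.1 < mo.toSyn b.1 ∨ (a.1 = b.1 ∧ a.2 < b.2)

/-- The dot product `w·u` of a weight vector with an exponent vector. -/
def wdot {n : ℕ} (w : Fin n → ℝ) (u : Fin n →₀ ℕ) : ℝ := ∑ i, w i * (u i : ℝ)

/-- The weight `ν(c) + w·u` of a term `c·x^u·e_k`. -/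
def twt {R : Type*} {n d : ℕ} (ν : R → WithTop ℝ) (w : Fin n → ℝ) (t : Term R n d) :
    WithTop ℝ :=
  ν t.1 + (wdot w t.2.1 : ℝ)

/-- The term (pre)order: `c·x^u·e_i ≤ c'·x^{u'}·e_j` iff `ν(c) + w·u < ν(c') + w·u'`, or
they are equal and `x^u·e_i ⪰ x^{u'}·e_j` (smaller terms are "more initial"). -/
def termLE {R : Type*} {n d : ℕ} (ν : R → WithTop ℝ) (w : Fin n → ℝ)
    (mo : MonomialOrder (Fin n)) (t t' : Term R n d) : Prop :=
  twt ν w t < twt ν w t' ∨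
    (twt ν w t = twt ν w t' ∧ (mmLt mo t'.2 t.2 ∨ t.2 = t'.2))

/-- The coefficient of `f ∈ R[x₁,…,xₙ]^d` at the module monomial `m = (u, k)`. -/
def coeffM {R : Type*} [CommSemiring R] {n d : ℕ} (f : Fin d → MvPolynomial (Fin n) R)
    (m : MMon n d) : R :=
  coeff m.1 (f m.2)

/-- `t` is the initial term `in_{w,≺}(f)` of `f`: it is a term of `f` which is least
in the term order among all terms of `f`. -/
def IsInit {R : Type*} [CommSemiring R] {n d : ℕ} (ν : R → WithTop ℝ) (w : Fin n → ℝ)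
    (mo : MonomialOrder (Fin n)) (f : Fin d → MvPolynomial (Fin n) R) (t : Term R n d) : Prop :=
  t.1 ≠ 0 ∧ coeffM f t.2 = t.1 ∧
    ∀ m : MMon n d, coeffM f m ≠ 0 → termLE ν w mo t (coeffM f m, m)

/-- The term `c·x^u·e_k` as an element of `R[x₁,…,xₙ]^d`. -/
noncomputable def termEl {R : Type*} [CommSemiring R] {n d : ℕ} (t : Term R n d) :
    Fin d → MvPolynomial (Fin n) R :=
  Pi.single t.2.2 (monomial t.2.1 t.1)

/-- The initial submodule `in_{w,≺}(I)`: the submodule generated by the initial terms of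
the nonzero elements of `I`. -/
noncomputable def inSub {R : Type*} [CommRing R] {n d : ℕ} (ν : R → WithTop ℝ)
    (w : Fin n → ℝ) (mo : MonomialOrder (Fin n))
    (I : Submodule (MvPolynomial (Fin n) R) (Fin d → MvPolynomial (Fin n) R)) :
    Submodule (MvPolynomial (Fin n) R) (Fin d → MvPolynomial (Fin n) R) :=
  Submodule.span _ {g | ∃ f ∈ I, f ≠ 0 ∧ ∃ t : Term R n d, IsInit ν w mo f t ∧ g = termEl t}

/-- `f ∈ R[x₁,…,xₙ]^d` is homogeneous (of some degree `δ`). -/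
def IsHomog {R : Type*} [CommSemiring R] {n d : ℕ} (f : Fin d → MvPolynomial (Fin n) R) : Prop :=
  ∃ δ : ℕ, ∀ m : MMon n d, coeffM f m ≠ 0 → (∑ i, m.1 i) = δ

/-- The `K`-subspace of `K[x₁,…,xₙ]^d` of homogeneous elements of degree `δ`
(together with `0`). -/
noncomputable def homogComponent (K : Type*) [Field K] (n d : ℕ) (δ : ℕ) :
    Submodule K (Fin d → MvPolynomial (Fin n) K) where
  carrier := {f | ∀ m : MMon n d, coeffM f m ≠ 0 → (∑ i, m.1 i) = δ}
  zero_mem' := by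
    intro m hm
    simp [coeffM] at hm
  add_mem' := by
    intro f g hf hg m hm
    have e : coeffM (f + g) m = coeffM f m + coeffM g m := by simp [coeffM]
    by_cases h : coeffM f m = 0
    · exact hg m (fun h2 => hm (by rw [e, h, h2, add_zero]))
    · exact hf m h
  smul_mem' := by
    intro c f hf m hm
    have e : coeffM (c • f) m = c * coeffM f m := by simp [coeffM]
    exact hf m (fun h => hm (by rw [e, h, mul_zero]))

/-- The `K`-dimension (as a cardinal) of the degree-`δ` graded component of the quotient
`K[x₁,…,xₙ]^d / N`: homogeneous elements of degree `δ` modulo those lying in `N`. -/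
noncomputable def hilbertFn {K : Type*} [Field K] {n d : ℕ}
    (N : Submodule (MvPolynomial (Fin n) K) (Fin d → MvPolynomial (Fin n) K)) (δ : ℕ) :
    Cardinal :=
  Module.rank K
    (homogComponent K n d δ ⧸
      Submodule.comap (homogComponent K n d δ).subtype (N.restrictScalars K))

/-!
A sum of elements with pairwise distinct initial monomials is nonzero: at the monomial of the least
of their initial terms, the other summands have coefficients of strictly larger valuation, so
nothing cancels. Hence elements of a `K`-subspace `W` with distinct initial monomials are linearly
independent. Conversely an element of `W` whose coefficients vanish at all initial monomials of `W`
is zero, so `dim W` is the number of initial monomials of `W`.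

Take `W = I_δ`. Since `I` contains the degree-`δ` parts of its elements, the initial monomials of
`I_δ` are those of degree `δ` of `I`, and they form a basis of `in_{w,≺}(I)_δ`.
Counting dimensions replaces the usual division algorithm, which need not terminate here: the term
order is not a well-order on terms with coefficients of arbitrary valuation.
-/

section Coefficients

variable {R : Type*} [CommSemiring R] {n d : ℕ}

/-- The basis of `R[x₁,…,xₙ]^d` over `R` consisting of the module monomials `x^u·e_k`. -/
noncomputable def monomialBasis (R : Type*) [CommSemiring R] (n d : ℕ) :
    Module.Basis (MMon n d) R (Fin d → MvPolynomial (Fin n) R) :=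
  (Pi.basis fun _ : Fin d => basisMonomials (Fin n) R).reindex
    ((Equiv.sigmaEquivProd _ _).trans (Equiv.prodComm _ _))

lemma monomialBasis_apply (m : MMon n d) : monomialBasis R n d m = termEl (1, m) := by
  simp [monomialBasis, termEl]

lemma monomialBasis_repr_apply (f : Fin d → MvPolynomial (Fin n) R) (m : MMon n d) :
    (monomialBasis R n d).repr f m = coeffM f m := by
  rw [monomialBasis, Module.Basis.repr_reindex_apply]
  exact Pi.basis_repr _ _ _

lemma mem_span_monomialBasis_image {A : Set (MMon n d)} {f : Fin d → MvPolynomial (Fin n) R} :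
    f ∈ Submodule.span R (monomialBasis R n d '' A) ↔ ∀ m, coeffM f m ≠ 0 → m ∈ A := by
  simp only [Module.Basis.mem_span_image, Set.subset_def, Finset.mem_coe, Finsupp.mem_support_iff,
    monomialBasis_repr_apply]

lemma ext_coeffM {f g : Fin d → MvPolynomial (Fin n) R} (h : ∀ m, coeffM f m = coeffM g m) :
    f = g :=
  (monomialBasis R n d).ext_elem fun m => by simpa only [monomialBasis_repr_apply] using h m

lemma coeffM_zero (m : MMon n d) : coeffM (0 : Fin d → MvPolynomial (Fin n) R) m = 0 :=
  coeff_zero m.1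

lemma coeffM_sum {ι : Type*} (s : Finset ι) (f : ι → Fin d → MvPolynomial (Fin n) R)
    (m : MMon n d) : coeffM (∑ i ∈ s, f i) m = ∑ i ∈ s, coeffM (f i) m := by
  simp only [coeffM, Finset.sum_apply, coeff_sum]

lemma coeffM_monomial_smul (u : Fin n →₀ ℕ) (c : R) (f : Fin d → MvPolynomial (Fin n) R)
    (m : MMon n d) :
    coeffM (monomial u c • f) m = if u ≤ m.1 then c * coeffM f (m.1 - u, m.2) else 0 := by
  simp only [coeffM, Pi.smul_apply, smul_eq_mul, coeff_monomial_mul']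

lemma exists_coeffM_ne_zero_of_smul {p : MvPolynomial (Fin n) R}
    {f : Fin d → MvPolynomial (Fin n) R} {m : MMon n d} (h : coeffM (p • f) m ≠ 0) :
    ∃ u m', coeffM f m' ≠ 0 ∧ m = (u + m'.1, m'.2) := by
  simp only [coeffM, Pi.smul_apply, smul_eq_mul, coeff_mul] at h
  obtain ⟨⟨u, u'⟩, hu, hne⟩ := Finset.exists_ne_zero_of_sum_ne_zero h
  rw [Finset.HasAntidiagonal.mem_antidiagonal] at hu
  exact ⟨u, (u', m.2), right_ne_zero_of_mul hne, Prod.ext hu.symm rfl⟩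

lemma eq_of_coeffM_termEl_ne_zero {t : Term R n d} {m : MMon n d}
    (h : coeffM (termEl t) m ≠ 0) : m = t.2 := by
  have hsmul : termEl t = t.1 • monomialBasis R n d t.2 := by
    rw [monomialBasis_apply, termEl, termEl, ← Pi.single_smul, smul_monomial, smul_eq_mul, mul_one]
  by_contra hne
  rw [hsmul, ← monomialBasis_repr_apply, map_smul, Module.Basis.repr_self, Finsupp.smul_apply,
    Finsupp.single_eq_of_ne hne, smul_zero] at h
  exact h rfl

end Coefficients

section GradedComponent

variable {R : Type*} [CommSemiring R] {n d : ℕ}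

/-- The projection of `R[x₁,…,xₙ]^d` onto its homogeneous elements of degree `δ`. -/
noncomputable def gradedComponent (δ : ℕ) :
    (Fin d → MvPolynomial (Fin n) R) →ₗ[R] (Fin d → MvPolynomial (Fin n) R) :=
  (homogeneousComponent δ).compLeft (Fin d)

lemma coeffM_gradedComponent (δ : ℕ) (f : Fin d → MvPolynomial (Fin n) R) (m : MMon n d) :
    coeffM (gradedComponent δ f) m = if m.1.degree = δ then coeffM f m else 0 := by
  simp only [coeffM, gradedComponent, LinearMap.compLeft_apply, Function.comp_apply,
    coeff_homogeneousComponent]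

lemma IsHomog.gradedComponent_eq_self_or_eq_zero {f : Fin d → MvPolynomial (Fin n) R}
    (hf : IsHomog f) (δ : ℕ) :
    gradedComponent δ f = f ∨ gradedComponent δ f = 0 := by
  obtain ⟨ε, hε⟩ := hf
  simp only [← Finsupp.degree_eq_sum] at hε
  rcases eq_or_ne ε δ with rfl | hne
  · refine Or.inl (ext_coeffM fun m => ?_)
    rw [coeffM_gradedComponent, ite_eq_left_iff]
    exact fun hm => (not_imp_comm.1 (hε m) hm).symm
  · refine Or.inr (ext_coeffM fun m => ?_)
    rw [coeffM_gradedComponent, coeffM_zero, ite_eq_right_iff]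
    exact fun hm => by_contra fun hfm => hne ((hε m hfm).symm.trans hm)

lemma gradedComponent_monomial_smul (δ : ℕ) (u : Fin n →₀ ℕ) (c : R)
    (f : Fin d → MvPolynomial (Fin n) R) :
    gradedComponent δ (monomial u c • f) =
      if u.degree ≤ δ then monomial u c • gradedComponent (δ - u.degree) f else 0 := by
  refine ext_coeffM fun m => ?_
  by_cases hum : u ≤ m.1
  · have hdeg : m.1.degree = (m.1 - u).degree + u.degree := by
      rw [← map_add, tsub_add_cancel_of_le hum]
    have hdeg_iff : m.1.degree = δ ↔ u.degree ≤ δ ∧ (m.1 - u).degree = δ - u.degree := by omega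
    by_cases huδ : u.degree ≤ δ <;>
      simp [coeffM_gradedComponent, coeffM_monomial_smul, coeffM_zero, hum, hdeg_iff, huδ]
  · split_ifs <;> simp [coeffM_gradedComponent, coeffM_monomial_smul, coeffM_zero, hum]

theorem gradedComponent_mem_span {s : Set (Fin d → MvPolynomial (Fin n) R)}
    (hs : ∀ g ∈ s, IsHomog g) {f : Fin d → MvPolynomial (Fin n) R}
    (hf : f ∈ Submodule.span (MvPolynomial (Fin n) R) s) (δ : ℕ) :
    gradedComponent δ f ∈ Submodule.span (MvPolynomial (Fin n) R) s := by
  induction hf using Submodule.span_induction generalizing δ with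
  | mem g hg =>
    rcases (hs g hg).gradedComponent_eq_self_or_eq_zero δ with h | h <;> rw [h]
    exacts [Submodule.subset_span hg, Submodule.zero_mem _]
  | zero => rw [map_zero]; exact Submodule.zero_mem _
  | add f g _ _ hf hg => rw [map_add]; exact Submodule.add_mem _ (hf δ) (hg δ)
  | smul p f _ hf =>
    induction p using MvPolynomial.induction_on' with
    | monomial u c =>
      rw [gradedComponent_monomial_smul]
      split_ifs
      exacts [Submodule.smul_mem _ _ (hf _), Submodule.zero_mem _]
    | add p q hp hq => rw [add_smul, map_add]; exact Submodule.add_mem _ hp hq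

end GradedComponent

section TermOrder

variable {R : Type*} {n d : ℕ} {ν : R → WithTop ℝ} {w : Fin n → ℝ} {mo : MonomialOrder (Fin n)}

/-- The sort key of a term: `termLE` is the pullback along it of a linear order. The order on
module monomials is dualized because greater monomials are more initial. -/
noncomputable def termKey (ν : R → WithTop ℝ) (w : Fin n → ℝ) (mo : MonomialOrder (Fin n))
    (t : Term R n d) : WithTop ℝ ×ₗ (mo.syn ×ₗ Fin d)ᵒᵈ :=
  toLex (twt ν w t, OrderDual.toDual (toLex (mo.toSyn t.2.1, t.2.2)))

lemma snd_eq_of_termKey_eq {t t' : Term R n d} (h : termKey ν w mo t = termKey ν w mo t') :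
    t.2 = t'.2 := by
  simp only [termKey, EmbeddingLike.apply_eq_iff_eq, Prod.mk.injEq] at h
  exact Prod.ext h.2.1 h.2.2

lemma termLE_iff_termKey_le {t t' : Term R n d} :
    termLE ν w mo t t' ↔ termKey ν w mo t ≤ termKey ν w mo t' := by
  have h_mon : (mmLt mo t'.2 t.2 ∨ t.2 = t'.2) ↔
      OrderDual.toDual (toLex (mo.toSyn t.2.1, t.2.2)) ≤
        OrderDual.toDual (toLex (mo.toSyn t'.2.1, t'.2.2)) := by
    rw [OrderDual.toDual_le_toDual, le_iff_lt_or_eq, Prod.Lex.toLex_lt_toLex, mmLt]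
    simp only [EmbeddingLike.apply_eq_iff_eq, Prod.ext_iff, eq_comm]
  rw [termLE, h_mon, termKey, termKey, Prod.Lex.toLex_le_toLex]

lemma lt_of_termKey_lt {a b : R} {m : MMon n d}
    (h : termKey ν w mo (a, m) < termKey ν w mo (b, m)) : ν a < ν b := by
  rcases Prod.Lex.toLex_lt_toLex.1 h with h | ⟨-, h⟩
  · exact lt_of_add_lt_add_right h
  · exact absurd h (lt_irrefl _)

lemma wdot_add (w : Fin n → ℝ) (a b : Fin n →₀ ℕ) : wdot w (a + b) = wdot w a + wdot w b := by
  simp only [wdot, Finsupp.add_apply, Nat.cast_add, mul_add, Finset.sum_add_distrib]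

lemma mmLt_add_left {m m' : MMon n d} (u : Fin n →₀ ℕ) (h : mmLt mo m m') :
    mmLt mo (u + m.1, m.2) (u + m'.1, m'.2) := by
  simpa only [mmLt, map_add, add_lt_add_iff_left, add_right_inj] using h

end TermOrder

section Initial

variable {R : Type*} [CommSemiring R] {n d : ℕ} {w : Fin n → ℝ} {mo : MonomialOrder (Fin n)}

lemma exists_isInit {f : Fin d → MvPolynomial (Fin n) R} (ν : R → WithTop ℝ) (w : Fin n → ℝ)
    (mo : MonomialOrder (Fin n)) (hf : f ≠ 0) : ∃ t, IsInit ν w mo f t := by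
  have hsupp : ((monomialBasis R n d).repr f).support.Nonempty := by
    rwa [Finsupp.support_nonempty_iff, Ne, LinearEquiv.map_eq_zero_iff]
  obtain ⟨m, hm, hmin⟩ :=
    Finset.exists_min_image _ (fun m => termKey ν w mo (coeffM f m, m)) hsupp
  simp only [Finsupp.mem_support_iff, monomialBasis_repr_apply] at hm hmin
  exact ⟨(coeffM f m, m), hm, rfl, fun m' hm' => termLE_iff_termKey_le.2 (hmin m' hm')⟩

lemma IsInit.gradedComponent {ν : R → WithTop ℝ} {f : Fin d → MvPolynomial (Fin n) R}
    {t : Term R n d} (h : IsInit ν w mo f t) :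
    IsInit ν w mo (gradedComponent t.2.1.degree f) t := by
  obtain ⟨hne, hcoeff, hmin⟩ := h
  refine ⟨hne, by rw [coeffM_gradedComponent, if_pos rfl, hcoeff], fun m hm => ?_⟩
  rw [coeffM_gradedComponent] at hm ⊢
  split_ifs at hm ⊢
  exacts [hmin m hm, absurd rfl hm]

/-- The monomials of the initial terms of the elements of `W`. -/
def initialMonomials (ν : R → WithTop ℝ) (w : Fin n → ℝ) (mo : MonomialOrder (Fin n))
    (W : Submodule R (Fin d → MvPolynomial (Fin n) R)) : Set (MMon n d) :=
  {m | ∃ f ∈ W, ∃ c, IsInit ν w mo f (c, m)}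

end Initial

section Valuation

variable {K : Type*} [Field K] {n d : ℕ} {v : AddValuation K (WithTop ℝ)} {w : Fin n → ℝ}
  {mo : MonomialOrder (Fin n)}

lemma termLE_mul_left {c : K} (hc : c ≠ 0) (u : Fin n →₀ ℕ) {a b : K} {m m' : MMon n d}
    (h : termLE v w mo (a, m) (b, m')) :
    termLE v w mo (c * a, (u + m.1, m.2)) (c * b, (u + m'.1, m'.2)) := by
  have twt_mul (x : K) (k : MMon n d) :
      twt v w (c * x, (u + k.1, k.2)) = twt v w (c, (u, k.2)) + twt v w (x, k) := by
    simp only [twt, v.map_mul, wdot_add, WithTop.coe_add]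
    exact add_add_add_comm _ _ _ _
  have twt_ne_top : v c + (wdot w u : ℝ) ≠ ⊤ :=
    WithTop.add_ne_top.2 ⟨v.ne_top_iff.2 hc, WithTop.coe_ne_top⟩
  rw [termLE, twt_mul, twt_mul]
  rcases h with hlt | ⟨heq, hmon⟩
  · exact Or.inl (WithTop.add_lt_add_left twt_ne_top hlt)
  · exact Or.inr ⟨congrArg _ heq, hmon.imp (mmLt_add_left u) fun h : m = m' => by rw [h]⟩

lemma IsInit.monomial_smul {f : Fin d → MvPolynomial (Fin n) K} {t : Term K n d}
    (h : IsInit v w mo f t) (u : Fin n →₀ ℕ) {c : K} (hc : c ≠ 0) :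
    IsInit v w mo (monomial u c • f) (c * t.1, (u + t.2.1, t.2.2)) := by
  obtain ⟨hne, hcoeff, hmin⟩ := h
  refine ⟨mul_ne_zero hc hne, ?_, fun m hm => ?_⟩
  · rw [coeffM_monomial_smul, if_pos le_self_add, add_tsub_cancel_left, hcoeff]
  · rw [coeffM_monomial_smul] at hm ⊢
    split_ifs at hm ⊢ with hle
    · simpa only [add_tsub_cancel_of_le hle] using
        termLE_mul_left hc u (hmin (m.1 - u, m.2) (right_ne_zero_of_mul hm))
    · exact absurd rfl hm

lemma IsInit.smul {f : Fin d → MvPolynomial (Fin n) K} {t : Term K n d}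
    (h : IsInit v w mo f t) {c : K} (hc : c ≠ 0) : IsInit v w mo (c • f) (c * t.1, t.2) := by
  have hsmul : c • f = monomial (0 : Fin n →₀ ℕ) c • f :=
    funext fun k => smul_eq_C_mul (f k) c
  simpa only [hsmul, zero_add] using h.monomial_smul 0 hc

lemma IsInit.termKey_le {f : Fin d → MvPolynomial (Fin n) K} {t : Term K n d}
    (h : IsInit v w mo f t) (m : MMon n d) :
    termKey v w mo t ≤ termKey v w mo (coeffM f m, m) := by
  rw [← termLE_iff_termKey_le]
  by_cases hm : coeffM f m = 0
  · left
    have twt_ne_top : twt v w t ≠ ⊤ := WithTop.add_ne_top.2 ⟨v.ne_top_iff.2 h.1, WithTop.coe_ne_top⟩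
    simpa only [twt, hm, v.map_zero, top_add] using twt_ne_top.lt_top
  · exact h.2.2 m hm

theorem sum_ne_zero_of_isInit {ι : Type*} {s : Finset ι} (hs : s.Nonempty)
    {f : ι → Fin d → MvPolynomial (Fin n) K} {t : ι → Term K n d}
    (hf : ∀ i ∈ s, IsInit v w mo (f i) (t i)) (ht : Set.InjOn (fun i => (t i).2) s) :
    ∑ i ∈ s, f i ≠ 0 := by
  classical
  obtain ⟨j, hj, hmin⟩ := s.exists_min_image (fun i => termKey v w mo (t i)) hs
  have hv_lt : ∀ i ∈ s.erase j, v (t j).1 < v (coeffM (f i) (t j).2) := fun i hi => by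
    obtain ⟨hij, hi⟩ := Finset.mem_erase.1 hi
    have hkey_ne : termKey v w mo (t j) ≠ termKey v w mo (t i) :=
      fun h => hij (ht hi hj (snd_eq_of_termKey_eq h).symm)
    exact lt_of_termKey_lt
      (((hmin i hi).lt_of_ne hkey_ne).trans_le ((hf i hi).termKey_le (t j).2))
  have hv_ne_top : v (t j).1 ≠ ⊤ := v.ne_top_iff.2 (hf j hj).1
  have hv_coeff : v (coeffM (∑ i ∈ s, f i) (t j).2) = v (t j).1 := by
    rw [coeffM_sum, ← Finset.add_sum_erase s _ hj, (hf j hj).2.1]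
    exact v.map_add_eq_of_lt_left (v.map_lt_sum hv_ne_top hv_lt)
  intro hzero
  rw [hzero, ← monomialBasis_repr_apply, map_zero, Finsupp.zero_apply, v.map_zero] at hv_coeff
  exact hv_ne_top hv_coeff.symm

theorem linearIndependent_of_isInit {ι : Type*} {f : ι → Fin d → MvPolynomial (Fin n) K}
    {t : ι → Term K n d} (hf : ∀ i, IsInit v w mo (f i) (t i))
    (ht : Function.Injective fun i => (t i).2) : LinearIndependent K f := by
  classical
  refine linearIndependent_iff'.2 fun s g hsum => ?_
  by_contra! ⟨j, hj, hgj⟩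
  refine sum_ne_zero_of_isInit (v := v) (w := w) (mo := mo) (s := s.filter (g · ≠ 0))
    (f := fun i => g i • f i) (t := fun i => (g i * (t i).1, (t i).2))
    ⟨j, Finset.mem_filter.2 ⟨hj, hgj⟩⟩ (fun i hi => (hf i).smul (Finset.mem_filter.1 hi).2)
    ht.injOn ?_
  rwa [Finset.sum_filter_of_ne fun i _ hi => left_ne_zero_of_smul hi]

end Valuation

section HilbertFunction

universe u

variable {K : Type u} [Field K] {n d : ℕ}

lemma rank_span_monomialBasis_image (A : Set (MMon n d)) :
    Module.rank K (Submodule.span K (monomialBasis K n d '' A)) =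
      Cardinal.lift.{u} (Cardinal.mk A) := by
  have hinj := (monomialBasis K n d).injective
  rw [rank_span_set ((monomialBasis K n d).linearIndependent.linearIndepOn A).id_image]
  simpa using Cardinal.mk_image_eq_lift _ A hinj

lemma homogComponent_eq_span (δ : ℕ) :
    homogComponent K n d δ =
      Submodule.span K (monomialBasis K n d '' {m | m.1.degree = δ}) :=
  Submodule.ext fun f => by
    simp only [mem_span_monomialBasis_image, Set.mem_ofPred_eq, Finsupp.degree_eq_sum]
    rfl

lemma finite_setOf_degree_eq (δ : ℕ) : {m : MMon n d | m.1.degree = δ}.Finite :=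
  ((Finsupp.finite_of_degree_eq δ).prod Set.finite_univ).subset fun _ hm => ⟨hm, Set.mem_univ _⟩

lemma rank_homogComponent_lt_aleph0 (δ : ℕ) :
    Module.rank K (homogComponent K n d δ) < Cardinal.aleph0 := by
  rw [homogComponent_eq_span, rank_span_monomialBasis_image, Cardinal.lift_lt_aleph0]
  exact (finite_setOf_degree_eq δ).lt_aleph0

lemma hilbertFn_add_rank_inf
    (N : Submodule (MvPolynomial (Fin n) K) (Fin d → MvPolynomial (Fin n) K)) (δ : ℕ) :
    hilbertFn N δ + Module.rank K ↥(homogComponent K n d δ ⊓ N.restrictScalars K) =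
      Module.rank K (homogComponent K n d δ) := by
  rw [← Submodule.map_comap_subtype, ← ((homogComponent K n d δ).equivSubtypeMap _).rank_eq]
  exact Submodule.rank_quotient_add_rank _

variable (v : AddValuation K (WithTop ℝ)) (w : Fin n → ℝ) (mo : MonomialOrder (Fin n))

theorem rank_eq_mk_initialMonomials (W : Submodule K (Fin d → MvPolynomial (Fin n) K)) :
    Module.rank K W = Cardinal.lift.{u} (Cardinal.mk (initialMonomials v w mo W)) := by
  refine le_antisymm ?_ ?_
  · let restrict : W →ₗ[K] (initialMonomials v w mo W →₀ K) :=
      Finsupp.lsubtypeDomain _ ∘ₗ (monomialBasis K n d).repr.toLinearMap ∘ₗ W.subtype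
    have restrict_injective : Function.Injective restrict := by
      refine (injective_iff_map_eq_zero _).2 fun f hf => ?_
      by_contra hne
      obtain ⟨⟨c, m⟩, hinit⟩ := exists_isInit v w mo (mt Submodule.coe_eq_zero.1 hne)
      have hcoeff : coeffM f.1 m = 0 := by
        rw [← monomialBasis_repr_apply]
        exact DFunLike.congr_fun hf ⟨m, f.1, f.2, c, hinit⟩
      exact hinit.1 (hinit.2.1.symm.trans hcoeff)
    simpa only [rank_finsupp_self] using LinearMap.rank_le_of_injective restrict restrict_injective
  · choose f hfW c hinit using fun m : initialMonomials v w mo W => m.2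
    have hli : LinearIndependent K fun m => (⟨f m, hfW m⟩ : W) :=
      .of_comp W.subtype (linearIndependent_of_isInit hinit Subtype.val_injective)
    simpa using hli.cardinal_lift_le_rank

lemma inSub_restrictScalars_eq_span
    (I : Submodule (MvPolynomial (Fin n) K) (Fin d → MvPolynomial (Fin n) K)) :
    (inSub v w mo I).restrictScalars K =
      Submodule.span K (monomialBasis K n d '' initialMonomials v w mo (I.restrictScalars K)) := by
  refine le_antisymm (fun f hf => ?_) (Submodule.span_le.2 ?_)
  · rw [Submodule.restrictScalars_mem] at hf
    induction hf using Submodule.span_induction with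
    | mem g hg =>
      obtain ⟨f, hf, -, t, hinit, rfl⟩ := hg
      refine mem_span_monomialBasis_image.2 fun m hm => ?_
      exact ⟨f, hf, t.1, eq_of_coeffM_termEl_ne_zero hm ▸ hinit⟩
    | zero => exact Submodule.zero_mem _
    | add f g _ _ hf hg => exact Submodule.add_mem _ hf hg
    | smul p f _ hf =>
      refine mem_span_monomialBasis_image.2 fun m hm => ?_
      obtain ⟨u, m', hm', rfl⟩ := exists_coeffM_ne_zero_of_smul hm
      obtain ⟨g, hg, c, hinit⟩ := mem_span_monomialBasis_image.1 hf m' hm'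
      exact ⟨_, I.smul_mem (monomial u 1) hg, _, hinit.monomial_smul u one_ne_zero⟩
  · rintro _ ⟨m, ⟨f, hf, c, hinit⟩, rfl⟩
    have hf_ne : f ≠ 0 := by
      rintro rfl
      exact hinit.1 hinit.2.1.symm
    have hsmul : monomialBasis K n d m = (C c⁻¹ : MvPolynomial (Fin n) K) • termEl (c, m) := by
      rw [monomialBasis_apply, termEl, termEl, ← Pi.single_smul, smul_eq_mul, C_mul_monomial,
        inv_mul_cancel₀ hinit.1]
    rw [hsmul]
    exact (inSub v w mo I).smul_mem _ (Submodule.subset_span ⟨f, hf, hf_ne, _, hinit, rfl⟩)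

lemma initialMonomials_homogComponent_inf {v w mo} {δ : ℕ}
    {I : Submodule (MvPolynomial (Fin n) K) (Fin d → MvPolynomial (Fin n) K)}
    (hI : ∀ f ∈ I, gradedComponent δ f ∈ I) :
    initialMonomials v w mo (homogComponent K n d δ ⊓ I.restrictScalars K) =
      {m | m.1.degree = δ} ∩ initialMonomials v w mo (I.restrictScalars K) := by
  ext m
  constructor
  · rintro ⟨f, ⟨hfδ, hfI⟩, c, hinit⟩
    exact ⟨(Finsupp.degree_eq_sum m.1).trans (hfδ m (hinit.2.1.trans_ne hinit.1)), f, hfI, c, hinit⟩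
  · rintro ⟨rfl, f, hf, c, hinit⟩
    refine ⟨_, ⟨fun m' hm' => ?_, hI f hf⟩, c, hinit.gradedComponent⟩
    rw [coeffM_gradedComponent] at hm'
    exact (Finsupp.degree_eq_sum m'.1).symm.trans (ite_ne_right_iff.1 hm').1

lemma homogComponent_inf_inSub_eq_span (δ : ℕ)
    (I : Submodule (MvPolynomial (Fin n) K) (Fin d → MvPolynomial (Fin n) K)) :
    homogComponent K n d δ ⊓ (inSub v w mo I).restrictScalars K =
      Submodule.span K (monomialBasis K n d ''
        ({m | m.1.degree = δ} ∩ initialMonomials v w mo (I.restrictScalars K))) := by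
  ext f
  rw [homogComponent_eq_span, inSub_restrictScalars_eq_span]
  simp only [Submodule.mem_inf, mem_span_monomialBasis_image, Set.mem_inter_iff]
  exact forall₂_and.symm

theorem hilbert_function_eq_initial_general
    (I : Submodule (MvPolynomial (Fin n) K) (Fin d → MvPolynomial (Fin n) K)) {δ : ℕ}
    (hI : ∀ f ∈ I, gradedComponent δ f ∈ I) :
    hilbertFn I δ = hilbertFn (inSub v w mo I) δ := by
  have hrank : Module.rank K ↥(homogComponent K n d δ ⊓ I.restrictScalars K) =
      Module.rank K ↥(homogComponent K n d δ ⊓ (inSub v w mo I).restrictScalars K) := by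
    rw [rank_eq_mk_initialMonomials v w mo, initialMonomials_homogComponent_inf hI,
      homogComponent_inf_inSub_eq_span, rank_span_monomialBasis_image]
  have hsum := (hilbertFn_add_rank_inf I δ).trans (hilbertFn_add_rank_inf (inSub v w mo I) δ).symm
  rw [hrank] at hsum
  refine Cardinal.eq_of_add_eq_add_right hsum ?_
  exact (Submodule.rank_mono inf_le_left).trans_lt (rank_homogComponent_lt_aleph0 δ)

end HilbertFunction

section ValOn

variable {K : Type*} [Field K] (V : ValOn K)

lemma ValOn.v_zero : V.v 0 = ⊤ :=
  (V.v_eq_top_iff 0).2 rfl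

lemma ValOn.v_one : V.v 1 = 0 := by
  have hne : V.v 1 ≠ ⊤ := mt (V.v_eq_top_iff 1).1 one_ne_zero
  have hadd := V.v_mul 1 1 one_ne_zero one_ne_zero
  rw [mul_one] at hadd
  lift V.v 1 to ℝ using hne with r
  exact_mod_cast add_eq_left.1 (WithTop.coe_injective hadd.symm)

/-- `V` as one of Mathlib's bundled additive valuations, which gives access to the ultrametric
estimates for finite sums. -/
noncomputable def ValOn.toAddValuation : AddValuation K (WithTop ℝ) :=
  .of V.v V.v_zero V.v_one V.v_add_min fun a b => by
    rcases eq_or_ne a 0 with rfl | ha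
    · rw [zero_mul, V.v_zero, top_add]
    rcases eq_or_ne b 0 with rfl | hb
    · rw [mul_zero, V.v_zero, add_top]
    exact V.v_mul a b ha hb

end ValOn

/-- **Invariance of the Hilbert function under passing to the initial submodule.**
If `I ⊆ K[x₁,…,xₙ]^d` is generated by finitely many homogeneous elements, then for every
degree `δ`, the `K`-dimension of the degree-`δ` graded component of `K[x₁,…,xₙ]^d / I`
equals that of `K[x₁,…,xₙ]^d / in_{w,≺}(I)`. -/
theorem hilbert_function_eq_initial {K : Type*} [Field K] {n d : ℕ}
    (V : ValOn K) (w : Fin n → ℝ) (mo : MonomialOrder (Fin n))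
    (I : Submodule (MvPolynomial (Fin n) K) (Fin d → MvPolynomial (Fin n) K))
    (hgen : ∃ (s : ℕ) (g : Fin s → Fin d → MvPolynomial (Fin n) K),
      (∀ i, IsHomog (g i)) ∧ Submodule.span (MvPolynomial (Fin n) K) (Set.range g) = I) :
    ∀ δ : ℕ, hilbertFn I δ = hilbertFn (inSub V.v w mo I) δ := by
  obtain ⟨s, g, hg, rfl⟩ := hgen
  exact fun δ => hilbert_function_eq_initial_general V.toAddValuation w mo _
    fun f hf => gradedComponent_mem_span (Set.forall_mem_range.2 hg) hf δ
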